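/- The total number of nodes at level ℓ among all ordered trees with n edges equals ((2ℓ+1)/(2n+1)) * C(2n+1, n-ℓ). -/

import Mathlib

open scoped Classical

/-- Height (number of up-steps minus number of down-steps) after the first `k` steps
of the word `w`, where `true` encodes an up-step and `false` a down-step. -/
def heightAt (n : ℕ) (w : Fin n → Bool) (k : ℕ) : ℤ :=
  ((Finset.univ.filter (fun i : Fin n => (i : ℕ) < k ∧ w i = true)).card : ℤ) -
  ((Finset.univ.filter (fun i : Fin n => (i : ℕ) < k ∧ w i = false)).card : ℤ)

/-- `w` is a Dyck word of semilength `n` (the standard encoding of an ordered tree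
with `n` edges via its pre-order traversal: `true` = step away from the root). -/
def IsDyck (n : ℕ) (w : Fin (2 * n) → Bool) : Prop :=
  (Finset.univ.filter (fun i : Fin (2 * n) => w i = true)).card = n ∧
  ∀ k : ℕ, k ≤ 2 * n → 0 ≤ heightAt (2 * n) w k

/-- The ordered trees with `n` edges, encoded as Dyck words. -/
noncomputable def dyckWords (n : ℕ) : Finset (Fin (2 * n) → Bool) :=
  Finset.univ.filter (fun w => IsDyck n w)

/-- The nodes of the tree encoded by `w` : `none` is the root and `some i` for an
up-step `i` (`w i = true`) is the node this step leads to. -/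
def isNode (n : ℕ) (w : Fin (2 * n) → Bool) : Option (Fin (2 * n)) → Prop
  | none => True
  | some i => w i = true

/-- The level (distance to the root) of a node. -/
def nodeLevel (n : ℕ) (w : Fin (2 * n) → Bool) : Option (Fin (2 * n)) → ℤ
  | none => 0
  | some i => heightAt (2 * n) w ((i : ℕ) + 1)

/-- The set of nodes at level `ℓ` of the tree encoded by `w`. -/
noncomputable def nodesAtLevel (n : ℕ) (w : Fin (2 * n) → Bool) (ℓ : ℕ) :
    Finset (Option (Fin (2 * n))) :=
  Finset.univ.filter (fun v => isNode n w v ∧ nodeLevel n w v = (ℓ : ℤ))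

/-- The number of nodes visited before the given node in the depth-first (pre-order)
traversal: the root comes first, and the non-root nodes appear in the order of their
up-steps in the Dyck word. -/
noncomputable def dfsScore (n : ℕ) (w : Fin (2 * n) → Bool) : Option (Fin (2 * n)) → ℕ
  | none => 0
  | some i => 1 +
      (Finset.univ.filter (fun j : Fin (2 * n) => (j : ℕ) < (i : ℕ) ∧ w j = true)).card

/-- The number of nodes visited before the given node in breadth-first search:
nodes are visited level by level, and from left to right within a level. -/
noncomputable def bfsScore (n : ℕ) (w : Fin (2 * n) → Bool) : Option (Fin (2 * n)) → ℕ
  | none => 0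
  | some i => 1 +
      (Finset.univ.filter (fun j : Fin (2 * n) =>
        w j = true ∧ (nodeLevel n w (some j) < nodeLevel n w (some i) ∨
          (nodeLevel n w (some j) = nodeLevel n w (some i) ∧ (j : ℕ) < (i : ℕ))))).card

/-- Sum of the dfs scores of all nodes at level `ℓ` over all ordered trees with `n` edges. -/
noncomputable def totalD (n ℓ : ℕ) : ℕ :=
  ∑ w ∈ dyckWords n, ∑ v ∈ nodesAtLevel n w ℓ, dfsScore n w v

/-- Sum of the bfs scores of all nodes at level `ℓ` over all ordered trees with `n` edges. -/
noncomputable def totalB (n ℓ : ℕ) : ℕ :=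
  ∑ w ∈ dyckWords n, ∑ v ∈ nodesAtLevel n w ℓ, bfsScore n w v

/-- Total number of nodes at level `ℓ` among all ordered trees with `n` edges. -/
noncomputable def levelCount (n ℓ : ℕ) : ℕ :=
  ∑ w ∈ dyckWords n, (nodesAtLevel n w ℓ).card

/-!
A non-root node at level `ℓ` is an up-step, ending at height `ℓ`, of a Dyck path. Cut the path
there: flipping the up-steps of the first part that leave a height for the last time turns them
into down-steps, and a Dyck path with a marked up-step becomes a nonnegative path from height `2ℓ`
to `0`. For a path started at an arbitrary height `h`, the part before the mark also has a lowest
height `j ≤ min h (ℓ - 1)`, and only `ℓ - j` steps are flipped; summed over `j`, this correspondence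
is an identity that is checked one step of the path at a time. By the reflection principle, the
paths from `2ℓ` to `0` number `C(2n, n + ℓ) - C(2n, n + ℓ + 1)`.
-/

/-- The nonnegative paths of `m` steps from height `h` to height `0`, encoded by their words of
steps (`true` = up). Heights are integers, so that there are no paths from a negative height. -/
noncomputable def ballotPaths (m : ℕ) (h : ℤ) : Finset (Fin m → Bool) :=
  {w | h + heightAt m w m = 0 ∧ ∀ k ≤ m, 0 ≤ h + heightAt m w k}

/-- The up-steps that end at height `l`, for the path with steps `w` started at height `h`. These
are the marks that stand for the nodes at level `l`. -/
noncomputable def upStepsTo {m : ℕ} (w : Fin m → Bool) (h l : ℤ) : Finset (Fin m) :=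
  {i | w i = true ∧ h + heightAt m w (i + 1) = l}

theorem heightAt_zero (m : ℕ) (w : Fin m → Bool) : heightAt m w 0 = 0 := by
  simp [heightAt]

theorem heightAt_cons_succ (m : ℕ) (b : Bool) (w : Fin m → Bool) (k : ℕ) :
    heightAt (m + 1) (Fin.cons b w) (k + 1) = (if b then 1 else -1) + heightAt m w k := by
  cases b
  · simp [heightAt, Fin.card_filter_univ_succ, sub_add_eq_sub_sub, neg_add_eq_sub]
  · simp [heightAt, Fin.card_filter_univ_succ, add_sub_right_comm, add_comm (1 : ℤ)]

theorem heightAt_self (m : ℕ) (w : Fin m → Bool) :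
    heightAt m w m = 2 * (Finset.univ.filter fun i => w i = true).card - m := by
  have h := Finset.card_filter_add_card_filter_not (s := Finset.univ) fun i => w i = true
  simp only [Bool.not_eq_true, Finset.card_univ, Fintype.card_fin] at h
  simp only [heightAt, Fin.is_lt, true_and]
  omega

theorem dyckWords_eq_ballotPaths (n : ℕ) : dyckWords n = ballotPaths (2 * n) 0 := by
  ext w
  rw [dyckWords, ballotPaths, Finset.mem_filter_univ, Finset.mem_filter_univ, IsDyck]
  simp only [zero_add, heightAt_self]
  refine and_congr_left fun _ => ?_
  push_cast
  omega

theorem ballotPaths_of_neg (m : ℕ) {h : ℤ} (hh : h < 0) : ballotPaths m h = ∅ := by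
  refine Finset.filter_eq_empty_iff.mpr fun w _ hw => ?_
  have := hw.2 0 m.zero_le
  rw [heightAt_zero] at this
  omega

theorem card_ballotPaths_zero (h : ℤ) : (ballotPaths 0 h).card = if h = 0 then 1 else 0 := by
  split_ifs with hh <;> simp [ballotPaths, heightAt_zero, hh]

theorem cons_mem_ballotPaths {m : ℕ} {h : ℤ} (hh : 0 ≤ h) (b : Bool) (w : Fin m → Bool) :
    Fin.cons b w ∈ ballotPaths (m + 1) h ↔ w ∈ ballotPaths m (h + if b then 1 else -1) := by
  simp only [ballotPaths, Finset.mem_filter_univ, heightAt_cons_succ, add_assoc]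
  refine and_congr_right fun _ => ⟨fun hw k hk => ?_, fun hw k hk => ?_⟩
  · simpa only [heightAt_cons_succ] using hw (k + 1) (by omega)
  · cases k with
    | zero => simpa [heightAt_zero] using hh
    | succ k => simpa only [heightAt_cons_succ] using hw k (by omega)

theorem sum_ballotPaths_succ {M : Type*} [AddCommMonoid M] (m : ℕ) {h : ℤ} (hh : 0 ≤ h)
    (F : (Fin (m + 1) → Bool) → M) :
    ∑ w ∈ ballotPaths (m + 1) h, F w =
      ∑ w ∈ ballotPaths m (h + 1), F (Fin.cons true w) +
        ∑ w ∈ ballotPaths m (h - 1), F (Fin.cons false w) := by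
  have mem_true := cons_mem_ballotPaths (m := m) hh true
  have mem_false := cons_mem_ballotPaths (m := m) hh false
  simp only [if_true, Bool.false_eq_true, if_false, ← sub_eq_add_neg] at mem_true mem_false
  calc ∑ w ∈ ballotPaths (m + 1) h, F w
      = ∑ w, if w ∈ ballotPaths (m + 1) h then F w else 0 := by simp
    _ = ∑ b, ∑ w : Fin m → Bool,
          if Fin.cons b w ∈ ballotPaths (m + 1) h then F (Fin.cons b w) else 0 := by
        rw [← (Fin.consEquiv fun _ => Bool).sum_comp, Fintype.sum_prod_type]
        rfl
    _ = _ := by simp [mem_true, mem_false]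

theorem card_ballotPaths_succ (m : ℕ) {h : ℤ} (hh : 0 ≤ h) :
    (ballotPaths (m + 1) h).card =
      (ballotPaths m (h + 1)).card + (ballotPaths m (h - 1)).card := by
  simp only [Finset.card_eq_sum_ones, sum_ballotPaths_succ m hh]

/-- The index `b` is the number of down-steps. The induction also needs two degenerate cases:
`h = -1`, where the two binomials agree by symmetry, and `b > m`, where every term is zero. -/
theorem card_ballotPaths_add_choose (m b : ℕ) (h : ℤ) (hh : -1 ≤ h) (hb : (2 * b : ℤ) = m + h) :
    (ballotPaths m h).card + m.choose (b + 1) = m.choose b := by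
  induction m generalizing b h with
  | zero =>
    rw [card_ballotPaths_zero]
    obtain rfl : h = 2 * b := by omega
    cases b with
    | zero => simp
    | succ b =>
      rw [if_neg (by omega)]
      simp
  | succ m ih =>
    obtain rfl | h_nonneg : h = -1 ∨ 0 ≤ h := by omega
    · rw [ballotPaths_of_neg _ (by norm_num), Finset.card_empty, zero_add]
      exact Nat.choose_symm_of_eq_add (by omega)
    · obtain ⟨b, rfl⟩ : ∃ b', b = b' + 1 := ⟨b - 1, by omega⟩
      have up := ih (b + 1) (h + 1) (by omega) (by omega)
      have down := ih b (h - 1) (by omega) (by omega)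
      rw [card_ballotPaths_succ m h_nonneg, Nat.choose_succ_succ', Nat.choose_succ_succ']
      omega

theorem succ_mul_card_ballotPaths (m b h : ℕ) (hb : 2 * b = m + h) :
    (m + 1) * (ballotPaths m h).card = (h + 1) * (m + 1).choose (b + 1) := by
  have reflection := card_ballotPaths_add_choose m b h (by omega) (by exact_mod_cast hb)
  have pascal := Nat.choose_succ_succ' m b
  have absorption := Nat.add_one_mul_choose_eq m b
  zify at *
  linear_combination (m + 1 : ℤ) * reflection + 2 * absorption + (m + 1 : ℤ) * pascal +
    ((m + 1).choose (b + 1) : ℤ) * hb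

theorem card_upStepsTo_cons_true {m : ℕ} (w : Fin m → Bool) (h l : ℤ) :
    (upStepsTo (Fin.cons true w : Fin (m + 1) → Bool) h l).card =
      (upStepsTo w (h + 1) l).card + if h + 1 = l then 1 else 0 := by
  split_ifs with hl <;>
    simp [upStepsTo, Fin.card_filter_univ_succ, heightAt_cons_succ, heightAt_zero, ← add_assoc, hl]

theorem card_upStepsTo_cons_false {m : ℕ} (w : Fin m → Bool) (h l : ℤ) :
    (upStepsTo (Fin.cons false w : Fin (m + 1) → Bool) h l).card =
      (upStepsTo w (h - 1) l).card := by
  simp [upStepsTo, Fin.card_filter_univ_succ, heightAt_cons_succ, sub_eq_add_neg, add_assoc]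

theorem sum_card_upStepsTo_succ (m : ℕ) {h : ℤ} (hh : 0 ≤ h) (l : ℤ) :
    ∑ w ∈ ballotPaths (m + 1) h, (upStepsTo w h l).card =
      ∑ w ∈ ballotPaths m (h + 1), (upStepsTo w (h + 1) l).card +
        ∑ w ∈ ballotPaths m (h - 1), (upStepsTo w (h - 1) l).card +
        if h + 1 = l then (ballotPaths m l).card else 0 := by
  simp only [sum_ballotPaths_succ m hh, card_upStepsTo_cons_true, card_upStepsTo_cons_false,
    Finset.sum_add_distrib]
  rw [add_right_comm]
  congr 1
  split_ifs with hl <;> simp [hl]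

theorem sum_range_min_add_succ {M : Type*} [AddCommMonoid M] (g : ℕ → M) (c l : ℕ) :
    ∑ j ∈ Finset.range (min (c + 1) l), (g j + g (j + 1)) =
      ∑ j ∈ Finset.range (min (c + 2) l), g j + ∑ j ∈ Finset.range (min c l), g (j + 1) +
        if c + 1 = l then g l else 0 := by
  rw [Finset.sum_add_distrib]
  obtain lt | rfl | gt := lt_trichotomy (c + 1) l
  · rw [min_eq_left lt.le, min_eq_left (by omega : c + 2 ≤ l), min_eq_left (by omega : c ≤ l),
      if_neg lt.ne, Finset.sum_range_succ _ (c + 1),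
      Finset.sum_range_succ (fun j => g (j + 1)) c]
    abel
  · rw [min_self, min_eq_right (by omega : c + 1 ≤ c + 2), min_eq_left (by omega : c ≤ c + 1),
      if_pos rfl, Finset.sum_range_succ (fun j => g (j + 1)), add_assoc]
  · rw [min_eq_right (by omega : l ≤ c + 1), min_eq_right (by omega : l ≤ c + 2),
      min_eq_right (by omega : l ≤ c), if_neg gt.ne', add_zero]

/-- The index `j` is the lowest height reached before the mark. The parameter `c` counts the heights
`0, …, h`, so that `c = 0` stands for the forbidden start `h = -1` in the induction. -/
theorem sum_card_upStepsTo (m c l : ℕ) (h : ℤ) (hc : h + 1 = c) :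
    ∑ w ∈ ballotPaths m h, (upStepsTo w h l).card =
      ∑ j ∈ Finset.range (min c l), (ballotPaths m (h + 2 * (l - j))).card := by
  induction m generalizing c h with
  | zero =>
    rw [Finset.sum_eq_zero fun w _ => by simp [upStepsTo], eq_comm]
    refine Finset.sum_eq_zero fun j hj => ?_
    rw [Finset.mem_range] at hj
    rw [card_ballotPaths_zero, if_neg (by omega)]
  | succ m ih =>
    cases c with
    | zero => simp [ballotPaths_of_neg (m + 1) (by omega : h < 0)]
    | succ c =>
      obtain rfl : h = c := by omega
      have shift (j : ℕ) : (c + 1 + 2 * (l - (j + 1 : ℕ)) : ℤ) = c - 1 + 2 * (l - j) := by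
        push_cast
        ring
      have first_step (j : ℕ) (hj : j ∈ Finset.range (min (c + 1) l)) :
          (ballotPaths (m + 1) (c + 2 * (l - j))).card =
            (ballotPaths m (c + 1 + 2 * (l - j))).card +
              (ballotPaths m (c + 1 + 2 * (l - (j + 1 : ℕ)))).card := by
        rw [Finset.mem_range] at hj
        rw [card_ballotPaths_succ m (by omega), shift, add_right_comm, add_sub_right_comm]
      rw [sum_card_upStepsTo_succ m (by omega), ih (c + 2) (c + 1) (by push_cast; ring),
        ih c (c - 1) (by ring), Finset.sum_congr rfl first_step,
        sum_range_min_add_succ fun j : ℕ => (ballotPaths m (c + 1 + 2 * (l - j))).card]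
      simp only [shift]
      congr 1
      obtain rfl | hl := eq_or_ne (c + 1) l
      · simp
      · rw [if_neg hl, if_neg (by omega)]

theorem card_nodesAtLevel (n ℓ : ℕ) (w : Fin (2 * n) → Bool) :
    (nodesAtLevel n w ℓ).card = (upStepsTo w 0 ℓ).card + if ℓ = 0 then 1 else 0 := by
  simp only [nodesAtLevel, upStepsTo, Finset.card_filter]
  rw [Fintype.sum_option, add_comm]
  refine congrArg₂ _ (Finset.sum_congr rfl fun i _ => if_congr ?_ rfl rfl)
    (if_congr ?_ rfl rfl) <;>
    simp [isNode, nodeLevel, @eq_comm ℤ 0]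

theorem levelCount_eq_card_ballotPaths (n ℓ : ℕ) :
    levelCount n ℓ = (ballotPaths (2 * n) (2 * ℓ : ℕ)).card := by
  have marked := sum_card_upStepsTo (2 * n) 1 ℓ 0 (by norm_num)
  simp only [levelCount, dyckWords_eq_ballotPaths, card_nodesAtLevel, Finset.sum_add_distrib,
    marked]
  cases ℓ <;> simp

/-- The total number of nodes at level ℓ among all ordered trees with n edges equals
((2ℓ+1)/(2n+1))·C(2n+1, n-ℓ). -/
theorem levelCount_eq (n ℓ : ℕ) (h : ℓ ≤ n) :
    (levelCount n ℓ : ℚ) =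
      ((2 * ℓ + 1 : ℚ) / (2 * n + 1)) * Nat.choose (2 * n + 1) (n - ℓ) := by
  have count := succ_mul_card_ballotPaths (2 * n) (n + ℓ) (2 * ℓ) (by ring)
  rw [← levelCount_eq_card_ballotPaths,
    Nat.choose_symm_of_eq_add (by omega : 2 * n + 1 = (n + ℓ + 1) + (n - ℓ))] at count
  rw [div_mul_eq_mul_div, eq_div_iff (by positivity), mul_comm]
  exact_mod_cast count
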